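/- Let X be uniform on [0,1], f(x) = x^{−α} with 0 < α < 1/2, and fix ε ∈ (0,1]. Among all intervals (a, a+ε] ⊂ [0,1], the conditional variance Var(f(X) | X ∈ (a, a+ε]) is maximized at a = 0. -/

import Mathlib

open MeasureTheory ProbabilityTheory

/-!
The variance of `f` under `μ` is half the `μ ⊗ μ`-average of `(f x - f y) ^ 2`, so it decreases
when all increments of `f` shrink. Translating the interval to the right by `c` amounts to replacing
`f` by `f (· + c)`, and this shrinks the increments of a decreasing convex function.
-/

section Convex

variable {𝕜 : Type*} [Field 𝕜] [LinearOrder 𝕜] [IsStrictOrderedRing 𝕜] {s : Set 𝕜} {f : 𝕜 → 𝕜}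
  {x y c : 𝕜}

lemma sub_le_sub_translate_of_convexOn (hf : ConvexOn 𝕜 s f) (hx : x ∈ s) (hyc : y + c ∈ s)
    (hxy : x ≤ y) (hc : 0 ≤ c) : f y - f x ≤ f (y + c) - f (x + c) := by
  rcases hxy.eq_or_lt with rfl | hxy
  · simp
  -- `x + c` and `y` are convex combinations of `x` and `y + c` with exchanged weights.
  have hd : 0 < y - x + c := by linarith
  obtain ⟨t, ht⟩ : ∃ t, t * (y - x + c) = c := ⟨c / (y - x + c), div_mul_cancel₀ c hd.ne'⟩
  have ht₀ : 0 ≤ t := nonneg_of_mul_nonneg_left (by rwa [ht]) hd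
  have ht₁ : 0 ≤ 1 - t := nonneg_of_mul_nonneg_left (by linarith) hd
  have hfxc : f (x + c) ≤ (1 - t) * f x + t * f (y + c) := by
    have h := hf.2 hx hyc ht₁ ht₀ (sub_add_cancel 1 t)
    rwa [show (1 - t) • x + t • (y + c) = x + c by
      simp only [smul_eq_mul]; linear_combination ht] at h
  have hfy : f y ≤ t * f x + (1 - t) * f (y + c) := by
    have h := hf.2 hx hyc ht₀ ht₁ (add_sub_cancel t 1)
    rwa [show t • x + (1 - t) • (y + c) = y by
      simp only [smul_eq_mul]; linear_combination -ht] at h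
  linear_combination hfxc + hfy

lemma abs_sub_translate_le_of_antitoneOn_of_convexOn (hanti : AntitoneOn f s)
    (hconv : ConvexOn 𝕜 s f) (hx : x ∈ s) (hy : y ∈ s) (hxc : x + c ∈ s) (hyc : y + c ∈ s)
    (hc : 0 ≤ c) : |f (x + c) - f (y + c)| ≤ |f x - f y| := by
  wlog hxy : x ≤ y generalizing x y
  · rw [abs_sub_comm, abs_sub_comm (f x)]
    exact this hy hx hyc hxc (le_of_not_ge hxy)
  rw [abs_of_nonneg (sub_nonneg.2 (hanti hxc hyc (by gcongr))),
    abs_of_nonneg (sub_nonneg.2 (hanti hx hy hxy))]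
  linarith [sub_le_sub_translate_of_convexOn hconv hx hyc hxy hc]

end Convex

section Variance

variable {Ω : Type*} {mΩ : MeasurableSpace Ω} {μ : Measure Ω} [IsProbabilityMeasure μ] {f g : Ω → ℝ}

lemma integral_sq_sub_prod_eq_two_mul_variance (hf : MemLp f 2 μ) :
    ∫ p, (f p.1 - f p.2) ^ 2 ∂μ.prod μ = 2 * Var[f; μ] := by
  have hf₁ : MemLp (fun p : Ω × Ω ↦ f p.1) 2 (μ.prod μ) := hf.comp_fst μ
  have hf₂ : MemLp (fun p : Ω × Ω ↦ f p.2) 2 (μ.prod μ) := hf.comp_snd μ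
  have hmean : ∫ p, (f p.1 - f p.2) ∂μ.prod μ = 0 := by
    rw [integral_sub (hf₁.integrable one_le_two) (hf₂.integrable one_le_two),
      integral_fun_fst, integral_fun_snd, sub_self]
  calc ∫ p, (f p.1 - f p.2) ^ 2 ∂μ.prod μ
      = Var[fun p ↦ f p.1 - f p.2; μ.prod μ] :=
        (variance_of_integral_eq_zero (hf₁.sub hf₂).aemeasurable hmean).symm
    _ = Var[f; μ] - 2 * 0 + Var[f; μ] := by
        rw [variance_fun_sub hf₁ hf₂, covariance_fst_snd_prod hf hf,
          measurePreserving_fst.variance_fun_comp hf.aemeasurable,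
          measurePreserving_snd.variance_fun_comp hf.aemeasurable]
    _ = 2 * Var[f; μ] := by ring

lemma variance_le_variance_of_ae_abs_sub_le (hg : AEStronglyMeasurable g μ) (hf : MemLp f 2 μ)
    (h : ∀ᵐ p ∂μ.prod μ, |g p.1 - g p.2| ≤ |f p.1 - f p.2|) : Var[g; μ] ≤ Var[f; μ] := by
  by_cases hg₂ : MemLp g 2 μ
  · suffices 2 * Var[g; μ] ≤ 2 * Var[f; μ] by linarith
    rw [← integral_sq_sub_prod_eq_two_mul_variance hg₂,
      ← integral_sq_sub_prod_eq_two_mul_variance hf]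
    refine integral_mono_ae ((hg₂.comp_fst μ).sub (hg₂.comp_snd μ)).integrable_sq
      ((hf.comp_fst μ).sub (hf.comp_snd μ)).integrable_sq ?_
    filter_upwards [h] with p hp using sq_le_sq.2 hp
  · rw [variance_of_not_memLp hg hg₂]
    exact variance_nonneg f μ

end Variance

section Cond

variable {Ω Ω' : Type*} {mΩ : MeasurableSpace Ω} {mΩ' : MeasurableSpace Ω'} {μ : Measure Ω}
  {ν : Measure Ω'}

lemma cond_restrict_of_subset {s t : Set Ω} (hs : MeasurableSet s) (hst : s ⊆ t) :
    (μ.restrict t)[|s] = μ[|s] := by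
  rw [ProbabilityTheory.cond, ProbabilityTheory.cond, Measure.restrict_restrict_of_subset hst,
    Measure.restrict_apply hs, Set.inter_eq_left.2 hst]

lemma measurePreserving_cond_preimage {φ : Ω → Ω'} (hφ : MeasurePreserving φ μ ν) {s : Set Ω'}
    (hs : MeasurableSet s) : MeasurePreserving φ (μ[|φ ⁻¹' s]) (ν[|s]) := by
  rw [ProbabilityTheory.cond, ProbabilityTheory.cond, hφ.measure_preimage hs.nullMeasurableSet]
  exact (hφ.restrict_preimage hs).smul_measure _

lemma memLp_cond {E : Type*} [NormedAddCommGroup E] {f : Ω → E} {p : ENNReal} {s : Set Ω}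
    (hf : MemLp f p (μ.restrict s)) (hs : μ s ≠ 0) : MemLp f p (μ[|s]) :=
  hf.smul_measure (ENNReal.inv_ne_top.2 hs)

lemma measurePreserving_add_right_cond_Ioc (a c ε : ℝ) :
    MeasurePreserving (· + c) (volume[|Set.Ioc a (a + ε)])
      (volume[|Set.Ioc (a + c) (a + c + ε)]) := by
  have h := measurePreserving_cond_preimage (measurePreserving_add_right volume c)
    (measurableSet_Ioc (a := a + c) (b := a + c + ε))
  rwa [Set.preimage_add_const_Ioc, add_sub_cancel_right,
    show a + c + ε - c = a + ε by ring] at h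

end Cond

lemma convexOn_exp_comp {E : Type*} [AddCommMonoid E] [SMul ℝ E] {s : Set E} {f : E → ℝ}
    (hf : ConvexOn ℝ s f) : ConvexOn ℝ s fun x ↦ Real.exp (f x) :=
  ⟨hf.1, fun x hx y hy a b ha hb hab ↦
    calc Real.exp (f (a • x + b • y))
        ≤ Real.exp (a • f x + b • f y) := Real.exp_monotone (hf.2 hx hy ha hb hab)
      _ ≤ a • Real.exp (f x) + b • Real.exp (f y) :=
          convexOn_exp.2 (Set.mem_univ _) (Set.mem_univ _) ha hb hab⟩

section Rpow

variable {r : ℝ}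

lemma convexOn_rpow_Ioi_of_exponent_nonpos (hr : r ≤ 0) :
    ConvexOn ℝ (Set.Ioi 0) fun x : ℝ ↦ x ^ r := by
  have hlog : ConvexOn ℝ (Set.Ioi 0) fun x ↦ r * Real.log x := by
    simpa [Pi.smul_def] using strictConcaveOn_log_Ioi.concaveOn.neg.smul (neg_nonneg.2 hr)
  refine (convexOn_exp_comp hlog).congr fun x hx ↦ ?_
  simp only [Real.rpow_def_of_pos hx, mul_comm]

lemma memLp_rpow_restrict_Ioc {p : ENNReal} (hp₀ : p ≠ 0) (hp : p ≠ ⊤) (hr : -1 < r * p.toReal)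
    (b : ℝ) : MemLp (fun x : ℝ ↦ x ^ r) p (volume.restrict (Set.Ioc 0 b)) := by
  rw [← integrable_norm_rpow_iff (by fun_prop) hp₀ hp]
  have hint : IntegrableOn (fun x : ℝ ↦ x ^ (r * p.toReal)) (Set.Ioc 0 b) :=
    (intervalIntegral.intervalIntegrable_rpow' hr).1
  have hpow : ∀ x ∈ Set.Ioc 0 b, x ^ (r * p.toReal) = ‖x ^ r‖ ^ p.toReal := fun x hx ↦ by
    rw [Real.norm_of_nonneg (Real.rpow_nonneg hx.1.le r), Real.rpow_mul hx.1.le]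
  exact hint.congr_fun hpow measurableSet_Ioc

end Rpow

theorem conditional_variance_power_maximized_at_zero_general {f : ℝ → ℝ} {a b ε : ℝ}
    (hanti : AntitoneOn f (Set.Ioc a (b + ε))) (hconv : ConvexOn ℝ (Set.Ioc a (b + ε)) f)
    (hf : MemLp f 2 (volume.restrict (Set.Ioc a (a + ε)))) (hε : 0 < ε) (hab : a ≤ b) :
    Var[f; volume[|Set.Ioc b (b + ε)]] ≤ Var[f; volume[|Set.Ioc a (a + ε)]] := by
  obtain ⟨c, rfl⟩ : ∃ c, b = a + c := ⟨b - a, by ring⟩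
  have hc : 0 ≤ c := by linarith
  set μ := volume[|Set.Ioc a (a + ε)]
  have hvol : volume (Set.Ioc a (a + ε)) ≠ 0 := by simp [hε]
  have : IsProbabilityMeasure μ := cond_isProbabilityMeasure_of_finite hvol measure_Ioc_lt_top.ne
  have hshift : MeasurePreserving (· + c) μ (volume[|Set.Ioc (a + c) (a + c + ε)]) :=
    measurePreserving_add_right_cond_Ioc a c ε
  have hmeas : AEMeasurable f (volume[|Set.Ioc (a + c) (a + c + ε)]) :=
    (aemeasurable_restrict_of_antitoneOn measurableSet_Ioc
      (hanti.mono (Set.Ioc_subset_Ioc_left hab))).smul_measure _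
  rw [← hshift.variance_fun_comp hmeas]
  refine variance_le_variance_of_ae_abs_sub_le
    (hmeas.comp_quasiMeasurePreserving hshift.quasiMeasurePreserving).aestronglyMeasurable
    (memLp_cond hf hvol) ?_
  have hmem : ∀ᵐ x ∂μ, x ∈ Set.Ioc a (a + ε) := ae_cond_mem measurableSet_Ioc
  filter_upwards [Measure.quasiMeasurePreserving_fst.ae hmem,
    Measure.quasiMeasurePreserving_snd.ae hmem] with p ⟨hx, hx'⟩ ⟨hy, hy'⟩
  apply abs_sub_translate_le_of_antitoneOn_of_convexOn hanti hconv _ _ _ _ hc <;>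
    constructor <;> linarith

/-- For `X` uniform on `[0,1]`, `f(x) = x^{−α}` with `0 < α < 1/2` and fixed
`ε ∈ (0,1]`, among all intervals `(a, a+ε] ⊆ [0,1]` the conditional variance
`Var(f(X) | X ∈ (a,a+ε])` is maximal at `a = 0`. -/
theorem conditional_variance_power_maximized_at_zero
    (α : ℝ) (hα : 0 < α) (hα' : α < 1/2) (ε : ℝ) (hε : ε ∈ Set.Ioc (0:ℝ) 1)
    (a : ℝ) (ha : 0 ≤ a) (ha' : a + ε ≤ 1) :
    variance (fun x => x ^ (-α))
        ((volume.restrict (Set.Icc (0:ℝ) 1))[|Set.Ioc a (a + ε)])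
      ≤ variance (fun x => x ^ (-α))
        ((volume.restrict (Set.Icc (0:ℝ) 1))[|Set.Ioc (0:ℝ) ε]) := by
  have hsub : Set.Ioc 0 (a + ε) ⊆ Set.Ioi 0 := Set.Ioc_subset_Ioi_self
  have hIoc : ∀ {u v : ℝ}, 0 ≤ u → v ≤ 1 → Set.Ioc u v ⊆ Set.Icc 0 1 := fun hu hv x hx ↦
    ⟨hu.trans hx.1.le, hx.2.trans hv⟩
  rw [cond_restrict_of_subset measurableSet_Ioc (hIoc ha ha'),
    cond_restrict_of_subset measurableSet_Ioc (hIoc le_rfl hε.2)]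
  simpa only [zero_add] using conditional_variance_power_maximized_at_zero_general
    ((Real.antitoneOn_rpow_Ioi_of_exponent_nonpos (by linarith)).mono hsub)
    ((convexOn_rpow_Ioi_of_exponent_nonpos (by linarith)).subset hsub (convex_Ioc _ _))
    (memLp_rpow_restrict_Ioc two_ne_zero ENNReal.ofNat_ne_top
      (by rw [ENNReal.toReal_ofNat]; linarith) _) hε.1 ha
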